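/- arXiv:2106.05255 — 2 statements merged into one kernel-verified Lean document; each statement's English description precedes it below -/
import Mathlib

section
/- Let d, N ≥ 1 and let ρ̄ ∈ L¹(𝕋^d) be a probability density (ρ̄ ≥ 0, ∫_{𝕋^d} ρ̄ = 1). Let ψ ∈ L^∞(𝕋^d × 𝕋^d) satisfy ‖ψ‖_{L^∞} ≤ 1/(2e) and ∫_{𝕋^d} ψ(z,x) ρ̄(x) dx = 0 for every z ∈ 𝕋^d. Then, with ρ̄_N = ρ̄^{⊗N}, α = (e‖ψ‖_{L^∞})⁴ < 1 and β = (√(2e)‖ψ‖_{L^∞})⁴ < 1, one has ∫_{𝕋^{dN}} ρ̄_N exp( (1/N) Σ_{i,j=1}^N ψ(x₁,xᵢ) ψ(x₁,xⱼ) ) dX ≤ 2 ( 1 + 10α/(1−α)³ + β/(1−β) ). -/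
/-!
Fix `z = x₁` and put `Yᵢ = ψ(z, xᵢ)`, so that the exponent is `λ (Y₁ + ∑_{i ≥ 2} Yᵢ)²` with
`λ = 1/N`. Given `z`, the `Yᵢ` with `i ≥ 2` are independent, centred and bounded by `S`, and they
can be integrated out one at a time. By Hoeffding's lemma, for a centred `Y` with `|Y| ≤ S`,
`E exp(f (t + Y)²) ≤ exp(f t²) exp(f S²) E exp(2 f t Y) ≤ exp((f + 2 f² S²) t² + f S²)`
(`lintegral_exp_sq_step`). The recursion `f ↦ f + 2 f² S²` is dominated by `f ↦ f / (1 - 2 S² f)`,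
which decreases `1/f` by `2 S²` at each step. Hence `n` variables give
`E exp(λ (t + ∑ Yᵢ)²) ≤ exp(λ (t² + n S²) / (1 - 2 S² λ n))` (`lintegral_exp_sq_sum`).

With `n = N - 1`, `|t| = |Y₁| ≤ S` and `S ≤ 1/4` the right side is at most `exp(1/14) ≤ 2`, uniformly
in `z`. So the integral is at most `2`, which is the leading term of the claimed bound; the remaining
terms are nonnegative because `α, β ∈ [0, 1)`.
-/

noncomputable section

open MeasureTheory Real Filter intervalIntegral
open scoped Classical

/-! ### Basic setup: the torus `𝕋^d` as `ℤ^d`-periodic functions on `ℝ^d` -/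

/-- Euclidean space `ℝ^d`. -/
abbrev Euc (d : ℕ) := EuclideanSpace ℝ (Fin d)

/-- Interpret a plain function `Fin d → ℝ` as a point of `Euc d`. -/
def toE {d : ℕ} (f : Fin d → ℝ) : Euc d := (WithLp.equiv 2 (Fin d → ℝ)).symm f

/-- The unit cube `[0,1)^d`, a fundamental domain for the torus `𝕋^d = ℝ^d/ℤ^d`. -/
def cube (d : ℕ) : Set (Euc d) := {x | ∀ i, 0 ≤ x i ∧ x i < 1}

/-- An integer vector in `ℝ^d`. -/
def intvec {d : ℕ} (k : Fin d → ℤ) : Euc d := toE (fun i => (k i : ℝ))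

/-- `ℤ^d`-periodicity: a function on `ℝ^d` descending to the torus `𝕋^d`. -/
def ZPer {d : ℕ} {E : Type*} (f : Euc d → E) : Prop :=
  ∀ (x : Euc d) (k : Fin d → ℤ), f (x + intvec k) = f x

/-- Partial derivative `∂f/∂xᵢ`. -/
def pd {d : ℕ} (i : Fin d) (f : Euc d → ℝ) (x : Euc d) : ℝ :=
  fderiv ℝ f x (EuclideanSpace.single i 1)

/-- Laplacian on `ℝ^d`. -/
def lap {d : ℕ} (f : Euc d → ℝ) (x : Euc d) : ℝ := ∑ i, pd i (pd i f) x

/-- Divergence of a vector field on `ℝ^d`. -/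
def divg {d : ℕ} (v : Euc d → Euc d) (x : Euc d) : ℝ :=
  ∑ i, fderiv ℝ (fun y => v y i) x (EuclideanSpace.single i 1)

/-- The `C^k` norm of a function: sum of sup-norms of iterated derivatives up to order `k`. -/
def Cknorm {E F : Type*} [NormedAddCommGroup E] [NormedSpace ℝ E]
    [NormedAddCommGroup F] [NormedSpace ℝ F] (k : ℕ) (f : E → F) : ℝ :=
  ∑ ℓ ∈ Finset.range (k + 1), ⨆ x, ‖iteratedFDeriv ℝ ℓ f x‖

/-! ### The periodic Biot–Savart kernel on `𝕋²` -/

/-- Rotation by 90 degrees: `x^⊥ = (-x₂, x₁)`. -/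
def perp2 (x : Euc 2) : Euc 2 := toE ![-(x 1), x 0]

/-- The planar Biot–Savart kernel `(1/2π) x^⊥/|x|²` on `ℝ²`. -/
def bsRaw (x : Euc 2) : Euc 2 := ((2 * π)⁻¹ / ‖x‖ ^ 2) • perp2 x

/-- The representative of `x` in the fundamental domain `[-1/2,1/2)²`. -/
def torusRep2 (x : Euc 2) : Euc 2 := toE (fun i => Int.fract (x i + 1/2) - 1/2)

/-- The smooth periodization correction
`γ(x) = lim_{R→∞} Σ_{0<|k|≤R} (1/2π)(x-k)^⊥/|x-k|²`. -/
def bsCorr (x : Euc 2) : Euc 2 :=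
  limUnder atTop (fun R : ℕ =>
    ∑ k ∈ (Finset.Icc (fun _ => -(R : ℤ)) (fun _ => (R : ℤ))).filter
        (fun k : Fin 2 → ℤ => k ≠ 0 ∧ (k 0) ^ 2 + (k 1) ^ 2 ≤ (R : ℤ) ^ 2),
      bsRaw (x - intvec k))

/-- The periodic Biot–Savart kernel `K` on `𝕋²`, with the convention `K(0) = 0`. -/
def Kbs (x : Euc 2) : Euc 2 :=
  if torusRep2 x = 0 then 0 else bsRaw (torusRep2 x) + bsCorr (torusRep2 x)

/-- The velocity field `u = K ∗ ω` on `𝕋²` obtained from a vorticity `ω`. -/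
def convK (w : Euc 2 → ℝ) (x : Euc 2) : Euc 2 := ∫ y in cube 2, w y • Kbs (x - y)

/-! ### `𝕋⁴ = 𝕋² × 𝕋²` and the weighted tensorized Biot–Savart kernel -/

/-- First (positive) component `x₊` of a point of `𝕋⁴ = 𝕋² × 𝕋²`. -/
def pp (x : Euc 4) : Euc 2 := toE ![x 0, x 1]

/-- Second (negative) component `x₋` of a point of `𝕋⁴ = 𝕋² × 𝕋²`. -/
def pm (x : Euc 4) : Euc 2 := toE ![x 2, x 3]

/-- Pairing `(a, b) ∈ 𝕋² × 𝕋² = 𝕋⁴`. -/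
def pair2 (a b : Euc 2) : Euc 4 := toE ![a 0, a 1, b 0, b 1]

/-- The weighted tensorized Biot–Savart kernel `K̄(x,y)` with weights `α₊ = ap`, `α₋ = am`. -/
def Kbar (ap am : ℝ) (x y : Euc 4) : Euc 4 :=
  pair2 (ap • Kbs (pp x - pp y) - am • Kbs (pp x - pm y))
        (ap • Kbs (pm x - pp y) - am • Kbs (pm x - pm y))

/-- The weighted tensorized Biot–Savart operator `𝒦̄ w (x) = ∫_{𝕋⁴} K̄(x,y) w(y) dy`. -/
def KbarOp (ap am : ℝ) (w : Euc 4 → ℝ) (x : Euc 4) : Euc 4 :=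
  ∫ y in cube 4, w y • Kbar ap am x y

/-! ### Many-particle configuration spaces `𝕋^{dN}` -/

/-- Configuration space of `N` particles in `𝕋^d`. -/
abbrev Conf (N d : ℕ) := Fin N → Euc d

/-- Fundamental domain for `𝕋^{dN}`. -/
def cubeN (N d : ℕ) : Set (Conf N d) := {X | ∀ i, X i ∈ cube d}

/-- Periodicity in every particle variable. -/
def ZPerN {N d : ℕ} (f : Conf N d → ℝ) : Prop :=
  ∀ (X : Conf N d) (k : Fin N → Fin d → ℤ), f (fun i => X i + intvec (k i)) = f X

/-- Partial derivative in the `j`-th coordinate of the `i`-th particle. -/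
def pdP {N d : ℕ} (i : Fin N) (j : Fin d) (f : Conf N d → ℝ) (X : Conf N d) : ℝ :=
  fderiv ℝ f X (Pi.single i (EuclideanSpace.single j 1))

/-- `|∇_{xᵢ} f|²`. -/
def gradPsq {N d : ℕ} (i : Fin N) (f : Conf N d → ℝ) (X : Conf N d) : ℝ :=
  ∑ j, (pdP i j f X) ^ 2

/-- `Δ_{xᵢ} f`. -/
def lapP {N d : ℕ} (i : Fin N) (f : Conf N d → ℝ) (X : Conf N d) : ℝ :=
  ∑ j, pdP i j (pdP i j f) X

/-- A probability density on `𝕋^{dN}`. -/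
def IsProbDensityN {N d : ℕ} (ρ : Conf N d → ℝ) : Prop :=
  Measurable ρ ∧ (∀ X, 0 ≤ ρ X) ∧ ZPerN ρ ∧ (∫ X in cubeN N d, ρ X) = 1

/-- A symmetric (exchangeable) function on `𝕋^{dN}`. -/
def SymDensity {N d : ℕ} (ρ : Conf N d → ℝ) : Prop :=
  ∀ (σ : Equiv.Perm (Fin N)) (X : Conf N d), ρ (X ∘ σ) = ρ X

/-- Boltzmann entropy `∫ ρ log ρ`. -/
def entropyOf {N d : ℕ} (ρ : Conf N d → ℝ) : ℝ :=
  ∫ X in cubeN N d, ρ X * Real.log (ρ X)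

/-- Fisher information in the `i`-th variable, `∫ |∇_{xᵢ}ρ|²/ρ`. -/
def fisherI {N d : ℕ} (ρ : Conf N d → ℝ) (i : Fin N) : ℝ :=
  ∫ X in cubeN N d, gradPsq i ρ X / ρ X

/-- Rescaled relative entropy `H_N(ρ | ρ̄) = (1/N) ∫ ρ log(ρ/ρ̄)`. -/
def relEntropy (N d : ℕ) (ρ ρb : Conf N d → ℝ) : ℝ :=
  (1 / (N : ℝ)) * ∫ X in cubeN N d, ρ X * Real.log (ρ X / ρb X)

/-- Tensor product density `w^{⊗N}`. -/
def tensorN {N d : ℕ} (w : Euc d → ℝ) : Conf N d → ℝ := fun X => ∏ i, w (X i)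

/-- Gluing `(x¹,…,x^k)` with `(x^{k+1},…,x^N)`. -/
def glue {d k N : ℕ} (X : Fin k → Euc d) (Y : Fin (N - k) → Euc d) : Conf N d :=
  fun i => if h : (i : ℕ) < k then X ⟨i, h⟩ else Y ⟨(i : ℕ) - k, by have := i.2; omega⟩

/-- The `k`-particle marginal `ρ_{N,k}` of a density on `𝕋^{dN}`. -/
def marginal (d k N : ℕ) (ρ : Conf N d → ℝ) (X : Fin k → Euc d) : ℝ :=
  ∫ Y in cubeN (N - k) d, ρ (glue X Y)

/-! ### The Liouville equation and entropy solutions -/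

/-- Distributional (weak) solution of the Liouville equation
`∂_t ρ + (1/N) Σ_{i,j} b(xⁱ,xʲ)·∇_{xⁱ}ρ = ν Σ_i Δ_{xⁱ}ρ` on `𝕋^{dN}`,
for a divergence-free (in the first variable) interaction kernel `b`. -/
def LiouvilleWeak (d N : ℕ) (b : Euc d → Euc d → Euc d) (ν : ℝ)
    (ρ : ℝ → Conf N d → ℝ) : Prop :=
  ∀ φ : ℝ → Conf N d → ℝ,
    ContDiff ℝ (⊤ : ℕ∞) (fun p : ℝ × Conf N d => φ p.1 p.2) → (∀ t, ZPerN (φ t)) →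
    ∀ t, 0 ≤ t →
      ((∫ X in cubeN N d, ρ t X * φ t X) - ∫ X in cubeN N d, ρ 0 X * φ 0 X)
        = ∫ s in (0:ℝ)..t, ∫ X in cubeN N d,
            ρ s X * (deriv (fun r => φ r X) s
              + (1 / (N : ℝ)) * ∑ i, ∑ j, ∑ l, b (X i) (X j) l * pdP i l (φ s) X
              + ν * ∑ i, lapP i (φ s) X)

/-- Entropy solution of the Liouville equation: a weak solution by time-dependent
probability densities satisfying the entropy dissipation inequality. -/
def LiouvilleEntropySol (d N : ℕ) (b : Euc d → Euc d → Euc d) (ν : ℝ)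
    (ρ : ℝ → Conf N d → ℝ) : Prop :=
  (∀ t, 0 ≤ t → IsProbDensityN (ρ t)) ∧
  LiouvilleWeak d N b ν ρ ∧
  (∀ᵐ t : ℝ, 0 ≤ t →
    entropyOf (ρ t) + ν * ∑ i, ∫ s in (0:ℝ)..t, fisherI (ρ s) i ≤ entropyOf (ρ 0))

/-! ### Classical solutions of (tensorized) Navier–Stokes in vorticity form -/

/-- Classical solution (`C¹` in time with values in `C⁰`, `C⁰` in time with values in `C²`)
of 2D Navier–Stokes in vorticity form `∂_t ω + u·∇ω = νΔω`, `u = K ∗ ω`, on `𝕋²`,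
for times in `S`. -/
def IsClassicalNS2On (ν : ℝ) (S : Set ℝ) (w : ℝ → Euc 2 → ℝ) : Prop :=
  (∀ t ∈ S, ContDiff ℝ 2 (w t) ∧ ZPer (w t)) ∧
  ContinuousOn (fun p : ℝ × Euc 2 => w p.1 p.2) (S ×ˢ Set.univ) ∧
  (∀ t ∈ S, ∀ x, DifferentiableAt ℝ (fun s => w s x) t ∧
    deriv (fun s => w s x) t + ∑ i, convK (w t) x i * pd i (w t) x = ν * lap (w t) x)

/-- Classical solution of the tensorized Navier–Stokes equation
`∂_t ω̄ + ū·∇ω̄ = νΔω̄`, `ū = 𝒦̄ ω̄`, on `𝕋⁴`, for times in `S`. -/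
def IsClassicalTNSOn (ap am ν : ℝ) (S : Set ℝ) (w : ℝ → Euc 4 → ℝ) : Prop :=
  (∀ t ∈ S, ContDiff ℝ 2 (w t) ∧ ZPer (w t)) ∧
  ContinuousOn (fun p : ℝ × Euc 4 => w p.1 p.2) (S ×ˢ Set.univ) ∧
  (∀ t ∈ S, ∀ x, DifferentiableAt ℝ (fun s => w s x) t ∧
    deriv (fun s => w s x) t + ∑ i, KbarOp ap am (w t) x i * pd i (w t) x
      = ν * lap (w t) x)

/-! ### The heat semigroup on `𝕋^d` and mild solutions -/

/-- The Gaussian heat kernel `G_t(x) = (4πt)^{-d/2} e^{-|x|²/4t}` on `ℝ^d`. -/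
def gaussKernel (d : ℕ) (t : ℝ) (x : Euc d) : ℝ :=
  (4 * π * t) ^ (-(d : ℝ) / 2) * Real.exp (-‖x‖ ^ 2 / (4 * t))

/-- The periodized heat kernel on `𝕋^d`. -/
def heatKer (d : ℕ) (t : ℝ) (x : Euc d) : ℝ :=
  ∑' k : Fin d → ℤ, gaussKernel d t (x + intvec k)

/-- The heat semigroup `e^{tΔ}` on `𝕋^d`. -/
def heatOp (d : ℕ) (t : ℝ) (f : Euc d → ℝ) (x : Euc d) : ℝ :=
  if t ≤ 0 then f x else ∫ y in cube d, heatKer d t (x - y) * f y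

/-- Mild solution on `[0, T]` of `∂_t ω + ∇·(uω) = νΔω`, `u = K ω`, i.e.
`ω(t) = e^{νtΔ}ω₀ - ∫₀ᵗ e^{ν(t-s)Δ} ∇·((Kω)ω)(s) ds`. -/
def IsMildSol (d : ℕ) (ν : ℝ) (K : (Euc d → ℝ) → Euc d → Euc d)
    (ω0 : Euc d → ℝ) (T : ℝ) (ω : ℝ → Euc d → ℝ) : Prop :=
  ω 0 = ω0 ∧
  ∀ t, 0 < t → t ≤ T → ∀ x,
    ω t x = heatOp d (ν * t) ω0 x
      - ∫ s in (0:ℝ)..t, heatOp d (ν * (t - s)) (divg (fun z => ω s z • K (ω s) z)) x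

/-- Weak divergence-freeness of the velocity operator: `∇·(Kω) = 0` distributionally. -/
def WeakDivFree (d : ℕ) (K : (Euc d → ℝ) → Euc d → Euc d) : Prop :=
  ∀ ω : Euc d → ℝ, Continuous ω → ZPer ω →
    ∀ φ : Euc d → ℝ, ContDiff ℝ 1 φ → ZPer φ →
      (∫ x in cube d, ∑ i, pd i φ x * K ω x i) = 0

/-- `K` maps `C^ℓ(𝕋^d)` to `C^ℓ(𝕋^d)^d` with bound `M`. -/
def KBound (d ℓ : ℕ) (M : ℝ) (K : (Euc d → ℝ) → Euc d → Euc d) : Prop :=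
  ∀ ω : Euc d → ℝ, ContDiff ℝ ℓ ω → ZPer ω →
    ContDiff ℝ ℓ (K ω) ∧ ZPer (K ω) ∧ Cknorm ℓ (K ω) ≤ M * Cknorm ℓ ω

/-- `K` is `M`-Lipschitz in the `C^ℓ` norm (continuity of `K : C^ℓ → C^ℓ`). -/
def KLip (d ℓ : ℕ) (M : ℝ) (K : (Euc d → ℝ) → Euc d → Euc d) : Prop :=
  ∀ ω ω' : Euc d → ℝ, ContDiff ℝ ℓ ω → ZPer ω → ContDiff ℝ ℓ ω' → ZPer ω' →
    Cknorm ℓ (fun x => K ω x - K ω' x) ≤ M * Cknorm ℓ (fun x => ω x - ω' x)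

section Auxiliary

variable {E : Type*} [MeasurableSpace E] {ν : Measure E}

/-- Tonelli, separating the first coordinate of a finite product. -/
lemma lintegral_pi_succ [SigmaFinite ν] {n : ℕ} (F : (Fin (n + 1) → E) → ENNReal) (hF : Measurable F) :
    ∫⁻ X, F X ∂(Measure.pi fun _ => ν)
      = ∫⁻ x, ∫⁻ Y : Fin n → E, F (Fin.cons x Y) ∂(Measure.pi fun _ => ν) ∂ν := by
  have hmp := (measurePreserving_piFinSuccAbove (fun _ : Fin (n + 1) => ν) 0).symm
  rw [← hmp.lintegral_comp_emb (MeasurableEquiv.measurableEmbedding _),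
    lintegral_prod (fun p => F _) (hF.comp (MeasurableEquiv.measurable _)).aemeasurable]
  simp [MeasurableEquiv.piFinSuccAbove, Fin.insertNthEquiv]

/-- One-variable step: integrating out a centred variable bounded by `S` turns the coefficient `f`
of `t²` into `f + 2 f² S²`, at the cost of a factor `exp (f S²)`. -/
lemma lintegral_exp_sq_step (ρ : E → ℝ) (hρm : Measurable ρ) (hρ0 : ∀ x, 0 ≤ ρ x)
    (hmass : ∫ x, ρ x ∂ν = 1) (φ : E → ℝ) (hφm : Measurable φ) (S : ℝ)
    (hφ : ∀ x, |φ x| ≤ S) (hc : ∫ x, φ x * ρ x ∂ν = 0) (f t : ℝ) (hf : 0 ≤ f) :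
    ∫⁻ x, ENNReal.ofReal (ρ x) * ENNReal.ofReal (Real.exp (f * (t + φ x) ^ 2)) ∂ν
      ≤ ENNReal.ofReal (Real.exp ((f + 2 * f ^ 2 * S ^ 2) * t ^ 2 + f * S ^ 2)) := by
  have hρi : Integrable ρ ν := by
    by_contra h
    rw [integral_undef h] at hmass
    exact zero_ne_one hmass
  set μ := ν.withDensity (fun x => ENNReal.ofReal (ρ x)) with hμ
  have hdm : Measurable (fun x => ENNReal.ofReal (ρ x)) := hρm.ennreal_ofReal
  have : IsProbabilityMeasure μ := ⟨by
    rw [hμ, withDensity_apply _ MeasurableSet.univ, Measure.restrict_univ,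
      ← ofReal_integral_eq_lintegral_ofReal hρi (Filter.Eventually.of_forall hρ0), hmass,
      ENNReal.ofReal_one]⟩
  have hcμ : ∫ x, φ x ∂μ = 0 := by
    rw [hμ, integral_withDensity_eq_integral_toReal_smul hdm
      (Filter.Eventually.of_forall fun _ => ENNReal.ofReal_lt_top), ← hc]
    refine integral_congr_ae (Filter.Eventually.of_forall fun x => ?_)
    simp [ENNReal.toReal_ofReal (hρ0 x), mul_comm]
  have hsg := ProbabilityTheory.hasSubgaussianMGF_of_mem_Icc_of_integral_eq_zero (μ := μ)
    (X := φ) (a := -S) (b := S) hφm.aemeasurable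
    (Filter.Eventually.of_forall fun x => abs_le.mp (hφ x)) hcμ
  have hmgf := hsg.mgf_le (2 * f * t)
  have hcoef : (((‖S - -S‖₊ / 2) ^ 2 : NNReal) : ℝ) = S ^ 2 := by
    push_cast
    rw [Real.norm_eq_abs, div_pow, sq_abs]
    ring
  rw [hcoef] at hmgf
  calc ∫⁻ x, ENNReal.ofReal (ρ x) * ENNReal.ofReal (Real.exp (f * (t + φ x) ^ 2)) ∂ν
      = ∫⁻ x, ENNReal.ofReal (Real.exp (f * (t + φ x) ^ 2)) ∂μ := by
        rw [hμ, lintegral_withDensity_eq_lintegral_mul _ hdm (by fun_prop)]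
        rfl
    _ ≤ ∫⁻ x, ENNReal.ofReal (Real.exp (f * t ^ 2 + f * S ^ 2))
          * ENNReal.ofReal (Real.exp (2 * f * t * φ x)) ∂μ := by
        refine lintegral_mono fun x => ?_
        rw [← ENNReal.ofReal_mul (Real.exp_pos _).le, ← Real.exp_add]
        refine ENNReal.ofReal_le_ofReal (Real.exp_le_exp.mpr ?_)
        have : f * φ x ^ 2 ≤ f * S ^ 2 :=
          mul_le_mul_of_nonneg_left (sq_le_sq' (abs_le.mp (hφ x)).1 (abs_le.mp (hφ x)).2) hf
        nlinarith
    _ = ENNReal.ofReal (Real.exp (f * t ^ 2 + f * S ^ 2))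
          * ENNReal.ofReal (ProbabilityTheory.mgf φ μ (2 * f * t)) := by
        rw [lintegral_const_mul _ (by fun_prop), ProbabilityTheory.mgf,
          ofReal_integral_eq_lintegral_ofReal (hsg.integrable_exp_mul _)
            (Filter.Eventually.of_forall fun _ => (Real.exp_pos _).le)]
    _ ≤ _ := by
        rw [← ENNReal.ofReal_mul (Real.exp_pos _).le]
        refine ENNReal.ofReal_le_ofReal
          ((mul_le_mul_of_nonneg_left hmgf (Real.exp_pos _).le).trans ?_)
        rw [← Real.exp_add]
        exact (congrArg Real.exp (by ring)).le

/-- The coefficient recursion `f ↦ f + 2 f² S²` is dominated by `f ↦ f / (1 - 2 S² f)`, written for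
`f = l / (1 - 2 S² l n)`. -/
lemma coeff_step (l S : ℝ) (n : ℕ) (hl : 0 ≤ l) (h : 2 * S ^ 2 * l * ((n : ℝ) + 1) < 1) :
    l / (1 - 2 * S ^ 2 * l * n) + 2 * (l / (1 - 2 * S ^ 2 * l * n)) ^ 2 * S ^ 2
      ≤ l / (1 - 2 * S ^ 2 * l * ((n : ℝ) + 1)) := by
  have hb : 0 ≤ 2 * S ^ 2 * l := by positivity
  set b := 2 * S ^ 2 * l with hbdef
  set D := 1 - b * n with hD
  have hD' : 1 - b * ((n : ℝ) + 1) = D - b := by rw [hD]; ring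
  have hDb : 0 < D - b := by rw [← hD']; linarith
  have hDp : 0 < D := by linarith
  rw [hD']
  have e : l / D + 2 * (l / D) ^ 2 * S ^ 2 = l * (D + b) / D ^ 2 := by
    rw [hbdef]; field_simp
  rw [e, div_le_div_iff₀ (by positivity) hDb]
  nlinarith [mul_nonneg hl (sq_nonneg b)]

/-- Exponential square moment of a sum of `n` independent centred variables bounded by `S`,
shifted by `t`. -/
lemma lintegral_exp_sq_sum [SigmaFinite ν] (ρ : E → ℝ) (hρm : Measurable ρ) (hρ0 : ∀ x, 0 ≤ ρ x)
    (hmass : ∫ x, ρ x ∂ν = 1) (φ : E → ℝ) (hφm : Measurable φ) (S : ℝ)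
    (hφ : ∀ x, |φ x| ≤ S) (hc : ∫ x, φ x * ρ x ∂ν = 0) (l : ℝ) (hl : 0 ≤ l) (n : ℕ) :
    2 * S ^ 2 * l * n < 1 → ∀ t : ℝ,
    ∫⁻ Y : Fin n → E, (∏ i, ENNReal.ofReal (ρ (Y i)))
        * ENNReal.ofReal (Real.exp (l * (t + ∑ i, φ (Y i)) ^ 2)) ∂(Measure.pi fun _ => ν)
      ≤ ENNReal.ofReal
          (Real.exp (l / (1 - 2 * S ^ 2 * l * n) * (t ^ 2 + n * S ^ 2))) := by
  induction n with
  | zero =>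
    intro _ t
    simp [lintegral_const]
  | succ n ih =>
    intro h t
    push_cast at h ⊢
    have hb : 0 ≤ 2 * S ^ 2 * l := by positivity
    have hn : 2 * S ^ 2 * l * n < 1 := by nlinarith
    have hstep := coeff_step l S n hl h
    set f := l / (1 - 2 * S ^ 2 * l * n) with hf
    set g := l / (1 - 2 * S ^ 2 * l * ((n : ℝ) + 1)) with hg
    have hf0 : 0 ≤ f := div_nonneg hl (by linarith)
    have hfg : f ≤ g := by nlinarith [mul_nonneg (sq_nonneg f) (sq_nonneg S)]
    rw [lintegral_pi_succ _ (by fun_prop)]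
    calc _ ≤ ∫⁻ x, ENNReal.ofReal (Real.exp (f * (n * S ^ 2)))
              * (ENNReal.ofReal (ρ x) * ENNReal.ofReal (Real.exp (f * (t + φ x) ^ 2))) ∂ν := by
          refine lintegral_mono fun x => ?_
          simp only [Fin.prod_univ_succ, Fin.sum_univ_succ, Fin.cons_zero, Fin.cons_succ,
            mul_assoc, ← add_assoc t]
          rw [lintegral_const_mul _ (by fun_prop)]
          refine (mul_le_mul_right (ih hn (t + φ x)) _).trans (le_of_eq ?_)
          rw [mul_add, Real.exp_add, ENNReal.ofReal_mul (Real.exp_pos _).le]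
          ring
      _ ≤ ENNReal.ofReal (Real.exp (f * (n * S ^ 2)))
            * ENNReal.ofReal (Real.exp ((f + 2 * f ^ 2 * S ^ 2) * t ^ 2 + f * S ^ 2)) := by
          rw [lintegral_const_mul _ (by fun_prop)]
          gcongr
          exact lintegral_exp_sq_step ρ hρm hρ0 hmass φ hφm S hφ hc f t hf0
      _ ≤ _ := by
          rw [← ENNReal.ofReal_mul (Real.exp_pos _).le, ← Real.exp_add]
          refine ENNReal.ofReal_le_ofReal (Real.exp_le_exp.mpr ?_)
          have h1 := mul_le_mul_of_nonneg_right hstep (sq_nonneg t)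
          have h2 : f * (((n : ℝ) + 1) * S ^ 2) ≤ g * (((n : ℝ) + 1) * S ^ 2) :=
            mul_le_mul_of_nonneg_right hfg (by positivity)
          nlinarith

/-- The dimension-free bound: the square exponential moment is at most `2` when `S ≤ 1/4`. -/
lemma lintegral_exp_sq_le_two [SigmaFinite ν] (ρ : E → ℝ) (hρm : Measurable ρ) (hρ0 : ∀ x, 0 ≤ ρ x)
    (hmass : ∫ x, ρ x ∂ν = 1) (ψ : E → E → ℝ)
    (hψm : Measurable (fun p : E × E => ψ p.1 p.2)) (S : ℝ) (hS0 : 0 ≤ S) (hS : S ≤ 1 / 4)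
    (hψ : ∀ z x, |ψ z x| ≤ S) (hc : ∀ z, ∫ x, ψ z x * ρ x ∂ν = 0) (n : ℕ) :
    ∫⁻ X : Fin (n + 1) → E, (∏ i, ENNReal.ofReal (ρ (X i)))
        * ENNReal.ofReal (Real.exp ((1 / ((n : ℝ) + 1)) * (∑ i, ψ (X 0) (X i)) ^ 2))
        ∂(Measure.pi fun _ => ν)
      ≤ 2 := by
  have hρi : Integrable ρ ν := by
    by_contra h
    rw [integral_undef h] at hmass
    exact zero_ne_one hmass
  have hψX : ∀ i : Fin (n + 1), Measurable fun X : Fin (n + 1) → E => ψ (X 0) (X i) :=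
    fun i => hψm.comp (f := fun X : Fin (n + 1) → E => (X 0, X i)) (by fun_prop)
  have hψz : ∀ z, Measurable (ψ z) := fun z => hψm.comp measurable_prodMk_left
  have hn1 : (0 : ℝ) < n + 1 := by positivity
  set l : ℝ := 1 / ((n : ℝ) + 1) with hl
  have hl0 : 0 ≤ l := by positivity
  have hl1 : l * (n + 1) = 1 := by rw [hl]; field_simp
  have hS2 : S ^ 2 ≤ 1 / 16 := by nlinarith
  have hln : 2 * S ^ 2 * l * n ≤ 1 / 8 := by
    have : l * n ≤ 1 := by nlinarith
    have : 0 ≤ l * n := by positivity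
    nlinarith [sq_nonneg S]
  rw [lintegral_pi_succ _ (by fun_prop)]
  calc _ ≤ ∫⁻ x, ENNReal.ofReal (ρ x) * 2 ∂ν := by
        refine lintegral_mono fun x => ?_
        simp only [Fin.prod_univ_succ, Fin.sum_univ_succ, Fin.cons_zero, Fin.cons_succ,
          mul_assoc]
        have := hψz x
        rw [lintegral_const_mul _ (by fun_prop)]
        gcongr
        refine (lintegral_exp_sq_sum ρ hρm hρ0 hmass (ψ x) (hψz x) S (hψ x) (hc x) l hl0 n
          (by linarith) (ψ x x)).trans ?_
        rw [← ENNReal.ofReal_ofNat 2]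
        refine ENNReal.ofReal_le_ofReal ?_
        have hxx : ψ x x ^ 2 ≤ S ^ 2 := sq_le_sq' (abs_le.mp (hψ x x)).1 (abs_le.mp (hψ x x)).2
        -- `1/14 = (1/16) / (7/8)`: numerator at most `S² ≤ 1/16`, denominator at least `7/8`.
        have hexp : l / (1 - 2 * S ^ 2 * l * n) * (ψ x x ^ 2 + n * S ^ 2) ≤ 1 / 14 := by
          rw [div_mul_eq_mul_div, div_le_iff₀ (by linarith)]
          have : l * (ψ x x ^ 2 + n * S ^ 2) ≤ l * ((n + 1) * S ^ 2) :=
            mul_le_mul_of_nonneg_left (by linarith) hl0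
          rw [← mul_assoc, hl1] at this
          linarith
        have hlog : (1 : ℝ) / 14 ≤ Real.log 2 := by linarith [Real.log_two_gt_d9]
        calc _ ≤ Real.exp (Real.log 2) := Real.exp_le_exp.mpr (hexp.trans hlog)
          _ = 2 := Real.exp_log two_pos
    _ = 2 := by
        rw [lintegral_mul_const _ hρm.ennreal_ofReal,
          ← ofReal_integral_eq_lintegral_ofReal hρi (Filter.Eventually.of_forall hρ0), hmass,
          ENNReal.ofReal_one, one_mul]

end Auxiliary


/-- Theorem 3 of Jabin–Wang: large deviation estimate for
`(1/N) Σ_{i,j} ψ(x₁,xᵢ)ψ(x₁,xⱼ)` against a tensorized density, when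
`‖ψ‖_{L^∞} ≤ 1/(2e)` and `∫ ψ(z,x) ρ̄(x) dx = 0` for all `z`. Here `S` is the (essential)
sup-norm of `ψ`, and `α = (eS)⁴ < 1`, `β = (√(2e) S)⁴ < 1`. -/
theorem jabin_wang_theorem3
    (d N : ℕ) (hd : 1 ≤ d) (hN : 1 ≤ N)
    (ρb : Euc d → ℝ) (hm : Measurable ρb) (hnn : ∀ x, 0 ≤ ρb x) (hper : ZPer ρb)
    (hmass : (∫ x in cube d, ρb x) = 1)
    (ψ : Euc d → Euc d → ℝ) (hψm : Measurable (fun p : Euc d × Euc d => ψ p.1 p.2))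
    (S : ℝ) (hS0 : 0 ≤ S) (hψb : ∀ z x, |ψ z x| ≤ S)
    (hSsmall : S ≤ 1 / (2 * Real.exp 1))
    (hcancel : ∀ z, (∫ x in cube d, ψ z x * ρb x) = 0) :
    ∀ α β : ℝ, α = (Real.exp 1 * S) ^ 4 → β = (Real.sqrt (2 * Real.exp 1) * S) ^ 4 →
      α < 1 ∧ β < 1 ∧
      (∫ X in cubeN N d, tensorN ρb X *
          Real.exp ((1 / (N:ℝ)) * ∑ i, ∑ j,
            ψ (X ⟨0, hN⟩) (X i) * ψ (X ⟨0, hN⟩) (X j)))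
        ≤ 2 * (1 + 10 * α / (1 - α) ^ 3 + β / (1 - β)) := by
  intro α β hα hβ
  have he : (2 : ℝ) ≤ Real.exp 1 := by linarith [Real.add_one_le_exp (1 : ℝ)]
  have heS : Real.exp 1 * S ≤ 1 / 2 := by
    rw [le_div_iff₀ (by positivity)] at hSsmall
    linarith
  have heS0 : 0 ≤ Real.exp 1 * S := by positivity
  have hS : S ≤ 1 / 4 := by nlinarith
  have hα0 : 0 ≤ α := by rw [hα]; positivity
  have hβ0 : 0 ≤ β := by rw [hβ]; positivity
  have hα1 : α < 1 := by
    rw [hα]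
    exact pow_lt_one₀ heS0 (by linarith) (by norm_num)
  have hβ1 : β < 1 := by
    -- `β = (2 e S²)²` and `2 e S² = 2 (e S) S ≤ S`.
    have e : β = (2 * (Real.exp 1 * S) * S) ^ 2 := by
      rw [hβ, show (Real.sqrt (2 * Real.exp 1) * S) ^ 4
        = (Real.sqrt (2 * Real.exp 1) ^ 2) ^ 2 * S ^ 4 by ring, Real.sq_sqrt (by positivity)]
      ring
    rw [e]
    exact pow_lt_one₀ (by positivity) (by nlinarith) (by norm_num)
  refine ⟨hα1, hβ1, ?_⟩
  have hint : (∫ X in cubeN N d, tensorN ρb X *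
          Real.exp ((1 / (N:ℝ)) * ∑ i, ∑ j,
            ψ (X ⟨0, hN⟩) (X i) * ψ (X ⟨0, hN⟩) (X j))) ≤ 2 := by
    obtain ⟨n, rfl⟩ : ∃ n, N = n + 1 := ⟨N - 1, by omega⟩
    have hres : (volume : Measure (Conf (n + 1) d)).restrict (cubeN (n + 1) d)
        = Measure.pi fun _ => (volume : Measure (Euc d)).restrict (cube d) := by
      rw [← Measure.restrict_pi_pi]
      congr 1
      ext X
      simp [cubeN]
    have hψX : ∀ i : Fin (n + 1),
        Measurable fun X : Conf (n + 1) d => ψ (X 0) (X i) :=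
      fun i => hψm.comp (f := fun X : Conf (n + 1) d => (X 0, X i)) (by fun_prop)
    have hten : Measurable (tensorN ρb : Conf (n + 1) d → ℝ) := by
      unfold tensorN
      fun_prop
    have hten0 : ∀ X : Conf (n + 1) d, 0 ≤ tensorN ρb X :=
      fun X => Finset.prod_nonneg fun i _ => hnn _
    have hfun : ∀ X : Conf (n + 1) d, tensorN ρb X *
          Real.exp ((1 / ((n + 1 : ℕ):ℝ)) * ∑ i, ∑ j,
            ψ (X ⟨0, hN⟩) (X i) * ψ (X ⟨0, hN⟩) (X j))
        = tensorN ρb X *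
          Real.exp ((1 / ((n : ℝ) + 1)) * (∑ i, ψ (X 0) (X i)) ^ 2) := by
      intro X
      rw [← Finset.sum_mul_sum, ← sq]
      push_cast
      rfl
    simp_rw [hfun]
    rw [hres, integral_eq_lintegral_of_nonneg_ae
      (Filter.Eventually.of_forall fun X => mul_nonneg (hten0 X) (Real.exp_pos _).le)
      (by fun_prop)]
    refine ENNReal.toReal_le_of_le_ofReal zero_le_two ?_
    rw [ENNReal.ofReal_ofNat]
    refine le_trans (le_of_eq ?_)
      (lintegral_exp_sq_le_two ρb hm hnn hmass ψ hψm S hS0 hS hψb hcancel n)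
    refine lintegral_congr fun X => ?_
    rw [ENNReal.ofReal_mul (hten0 X), tensorN, ENNReal.ofReal_prod_of_nonneg fun i _ => hnn _]
  have h1 : 0 ≤ 10 * α / (1 - α) ^ 3 :=
    div_nonneg (by positivity) (pow_nonneg (by linarith) 3)
  have h2 : 0 ≤ β / (1 - β) := div_nonneg hβ0 (by linarith)
  linarith
end
end

section
/- There is a universal constant C with the following property. Let d, N ≥ 1 and let ρ̄ ∈ L¹(𝕋^d) be a probability density. Let φ ∈ L^∞(𝕋^d × 𝕋^d) satisfy γ := C‖φ‖_{L^∞}² < 1 together with the two cancellation conditions ∫_{𝕋^d} φ(x,z) ρ̄(x) dx = 0 for all z and ∫_{𝕋^d} φ(x,z) ρ̄(z) dz = 0 for all x. Then, with ρ̄_N = ρ̄^{⊗N}, ∫_{𝕋^{dN}} ρ̄_N exp( (1/N) Σ_{i,j=1}^N φ(xᵢ,xⱼ) ) dX ≤ 3/(1−γ) < ∞. -/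
/-!
Let `X₁, …, X_N` be i.i.d. with law `μ = ρ̄ dx`. The diagonal part of `(1/N) ∑ φ(Xᵢ, Xⱼ)` is at most
`S`, so the point is the off-diagonal part, a degenerate U-statistic.

*Decoupling.* By Jensen's inequality (`exp_decoupling`) its exponential moment is at most the average
over all splittings of the particles in two groups `I`, `J` of
`𝔼 exp ((4/N) ∑_{i ∈ I, j ∈ J} φ(Xᵢ, Yⱼ))` with `X` and `Y` independent.

*First group.* Given `Y`, set `f_Y(x) = (4/N) ∑_j φ(x, Yⱼ)`. It is centred in `x` and bounded by
`4S ≤ 1`, so `∫ exp f_Y dμ ≤ exp (∫ f_Y² dμ)`, and integrating over the at most `N` particles `Xᵢ`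
gives at most `exp (N ∫ f_Y² dμ) ≤ ∫ exp (N f_Y(x)²) dμ(x)`, again by Jensen.

*Second group.* For fixed `x`, `∑_j φ(x, Yⱼ)` is a sum of independent centred variables bounded by
`S`, hence sub-Gaussian with parameter at most `N S²` by Hoeffding's lemma. Linearizing the square
with an auxiliary Gaussian (`integral_exp_sq_le_of_subgaussian`) bounds the `Y`-expectation of
`exp (N f_Y(x)²)` by `√2` when `S ≤ 1/10`.

Altogether the integral is at most `exp S * √2 ≤ 3`, which is stronger than `3 / (1 - 100 S²)`.
-/

noncomputable section

open MeasureTheory Real Filter intervalIntegral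
open scoped Classical

namespace JabinWang
open ProbabilityTheory
open scoped NNReal ENNReal

/-- For `i ≠ j`, a quarter of all `Bool`-labellings put `i` in the first class and `j` in the
second: flipping one label is a bijection, so imposing each of the two labels halves the count. -/
theorem sum_selector {ι : Type*} [Fintype ι] [DecidableEq ι] {i j : ι} (hij : i ≠ j) :
    ∑ ε : ι → Bool, (if ε i = true ∧ ε j = false then (1 : ℝ) else 0)
      = (2 : ℝ) ^ Fintype.card ι / 4 := by
  let flip (k : ι) : (ι → Bool) ≃ (ι → Bool) := Function.Involutive.toPerm
    (fun ε => Function.update ε k (!ε k)) (fun ε => by simp)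
  have hflip : ∀ (k : ι) (f : (ι → Bool) → ℝ),
      ∑ ε, f (Function.update ε k (!ε k)) = ∑ ε, f ε := fun k f => (flip k).sum_comp f
  have h1 : ∑ ε : ι → Bool, (if ε i = true then (1 : ℝ) else 0)
      = 2 * ∑ ε : ι → Bool, (if ε i = true ∧ ε j = false then (1 : ℝ) else 0) := by
    have h := hflip j (fun ε => if ε i = true ∧ ε j = false then (1 : ℝ) else 0)
    rw [two_mul]
    nth_rewrite 1 [← h]
    rw [← Finset.sum_add_distrib]
    refine Finset.sum_congr rfl fun ε _ => ?_
    cases h1 : ε i <;> cases h2 : ε j <;> simp [hij, h1]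
  have h2 : ∑ _ε : ι → Bool, (1 : ℝ)
      = 2 * ∑ ε : ι → Bool, (if ε i = true then (1 : ℝ) else 0) := by
    have h := hflip i (fun ε => if ε i = true then (1 : ℝ) else 0)
    rw [two_mul]
    nth_rewrite 1 [← h]
    rw [← Finset.sum_add_distrib]
    refine Finset.sum_congr rfl fun ε _ => ?_
    cases h1 : ε i <;> simp
  have h3 : ∑ _ε : ι → Bool, (1 : ℝ) = 2 ^ Fintype.card ι := by simp
  linarith

/-- Decoupling: an off-diagonal double sum is four times the average, over all splittings `ε` of
the index set in two classes, of its part with `i` in the first class and `j` in the second, so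
Jensen's inequality applies to `exp`. -/
theorem exp_decoupling {ι : Type*} [Fintype ι] [DecidableEq ι] (a : ι → ι → ℝ) :
    exp (∑ i, ∑ j, if i = j then 0 else a i j)
      ≤ ∑ ε : ι → Bool, ((2 : ℝ) ^ Fintype.card ι)⁻¹ *
          exp (4 * ∑ i, ∑ j, if ε i = true ∧ ε j = false then a i j else 0) := by
  have key : (∑ i, ∑ j, if i = j then 0 else a i j)
      = ∑ ε : ι → Bool, ((2 : ℝ) ^ Fintype.card ι)⁻¹ •
          (4 * ∑ i, ∑ j, if ε i = true ∧ ε j = false then a i j else 0) := by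
    simp only [smul_eq_mul, Finset.mul_sum]
    symm
    refine Finset.sum_comm.trans (Finset.sum_congr rfl fun i _ => ?_)
    refine Finset.sum_comm.trans (Finset.sum_congr rfl fun j _ => ?_)
    by_cases hij : i = j
    · subst hij
      rw [if_pos rfl]
      refine Finset.sum_eq_zero fun ε _ => ?_
      cases ε i <;> simp
    · rw [if_neg hij]
      have h := sum_selector hij
      symm
      calc a i j = ((2 : ℝ) ^ Fintype.card ι)⁻¹ * (4 * a i j) *
            ((2 : ℝ) ^ Fintype.card ι / 4) := by field_simp
        _ = _ := by
          rw [← h, Finset.mul_sum]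
          refine Finset.sum_congr rfl fun ε _ => ?_
          split_ifs <;> ring
  rw [key]
  refine (convexOn_exp.map_sum_le (fun _ _ => by positivity) ?_ (fun _ _ => Set.mem_univ _)).trans
    (le_of_eq ?_)
  · simp
  · simp

/-- The factor `exp (c g² / 2)` at most doubles the variance of the Gaussian: the integrand is
bounded by `√2` times the density of `N(0, 2v)`. -/
theorem lintegral_gaussian_exp_sq_le {v : ℝ≥0} (hv : v ≠ 0) {c : ℝ} (hc : (v : ℝ) * c ≤ 1 / 2) :
    ∫⁻ g, ENNReal.ofReal (exp (c * g ^ 2 / 2)) ∂(gaussianReal 0 v) ≤ ENNReal.ofReal √2 := by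
  have hv0 : (0 : ℝ) < v := by positivity
  rw [gaussianReal_of_var_ne_zero _ hv,
    lintegral_withDensity_eq_lintegral_mul _ (measurable_gaussianPDF 0 v) (by fun_prop)]
  have hle : ∀ g : ℝ, (gaussianPDF 0 v * fun g => ENNReal.ofReal (exp (c * g ^ 2 / 2))) g
      ≤ ENNReal.ofReal √2 * gaussianPDF 0 (2 * v) g := by
    intro g
    simp only [Pi.mul_apply, gaussianPDF]
    rw [← ENNReal.ofReal_mul (gaussianPDFReal_nonneg _ _ _), ← ENNReal.ofReal_mul (by positivity)]
    apply ENNReal.ofReal_le_ofReal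
    simp only [gaussianPDFReal, sub_zero, NNReal.coe_mul, NNReal.coe_ofNat]
    have h1 : √(2 * π * (2 * v)) = √2 * √(2 * π * v) := by
      rw [← Real.sqrt_mul (by norm_num)]; ring_nf
    have h2 : (0 : ℝ) < √(2 * π * v) := by positivity
    have h3 : (0 : ℝ) < √2 := by positivity
    rw [h1, mul_inv, mul_assoc, ← Real.exp_add]
    have h4 : √2 * ((√2)⁻¹ * (√(2 * π * v))⁻¹ * exp (-g ^ 2 / (2 * (2 * v))))
        = (√(2 * π * v))⁻¹ * exp (-g ^ 2 / (2 * (2 * v))) := by field_simp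
    rw [h4]
    gcongr
    have h5 : -g ^ 2 / (2 * (2 * (v : ℝ))) - (-g ^ 2 / (2 * v) + c * g ^ 2 / 2)
        = g ^ 2 / (2 * v) * (1 / 2 - v * c) := by field_simp; ring
    have : 0 ≤ g ^ 2 / (2 * (v : ℝ)) * (1 / 2 - v * c) :=
      mul_nonneg (by positivity) (by linarith)
    linarith
  calc _ ≤ ∫⁻ g, ENNReal.ofReal √2 * gaussianPDF 0 (2 * v) g := lintegral_mono hle
    _ = ENNReal.ofReal √2 := by
      rw [lintegral_const_mul _ (measurable_gaussianPDF _ _),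
        lintegral_gaussianPDF_eq_one _ (by simpa using hv), mul_one]

/-- Square-exponential moment of a sub-Gaussian variable, by the Gaussian linearization
`exp (v w² / 2) = 𝔼 exp (g w)` with `g ∼ N(0, v)`, and Tonelli's theorem. -/
theorem integral_exp_sq_le_of_subgaussian {Ω : Type*} [MeasurableSpace Ω] {P : Measure Ω}
    [IsProbabilityMeasure P] {W : Ω → ℝ} (hW : Measurable W) {c : ℝ≥0}
    (hsub : HasSubgaussianMGF W c P) {v : ℝ≥0} (hv : v ≠ 0) (hc : (v : ℝ) * c ≤ 1 / 2) :
    ∫ ω, exp (v * W ω ^ 2 / 2) ∂P ≤ √2 := by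
  have hlin : ∀ ω, ENNReal.ofReal (exp (v * W ω ^ 2 / 2))
      = ∫⁻ g, ENNReal.ofReal (exp (g * W ω)) ∂(gaussianReal 0 v) := by
    intro ω
    have h := congrFun (mgf_fun_id_gaussianReal (μ := 0) (v := v)) (W ω)
    simp only [mgf, zero_mul, zero_add] at h
    rw [← h, ofReal_integral_eq_lintegral_ofReal (integrable_exp_mul_gaussianReal _)
      (ae_of_all _ fun _ => (exp_pos _).le)]
    simp only [mul_comm]
  rw [integral_eq_lintegral_of_nonneg_ae (ae_of_all _ fun _ => (exp_pos _).le)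
    (by fun_prop)]
  refine ENNReal.toReal_le_of_le_ofReal (by positivity) ?_
  simp_rw [hlin]
  rw [lintegral_lintegral_swap (by fun_prop)]
  refine le_trans (lintegral_mono fun g => ?_) (lintegral_gaussian_exp_sq_le hv hc)
  rw [← ofReal_integral_eq_lintegral_ofReal (hsub.integrable_exp_mul g)
    (ae_of_all _ fun _ => (exp_pos _).le)]
  exact ENNReal.ofReal_le_ofReal (hsub.mgf_le g)

/-- The product of measures with a common integrable density `ρ` has density `∏ i, ρ (X i)`. -/
theorem pi_withDensity_ofReal {ι α : Type*} [Fintype ι] [MeasurableSpace α] (ν : Measure α)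
    [SigmaFinite ν] {ρ : α → ℝ} (hρ0 : ∀ x, 0 ≤ ρ x) (hρ : Integrable ρ ν) :
    Measure.pi (fun _ : ι => ν.withDensity fun x => ENNReal.ofReal (ρ x))
      = (Measure.pi fun _ : ι => ν).withDensity fun X => ENNReal.ofReal (∏ i, ρ (X i)) := by
  have : IsFiniteMeasure (ν.withDensity fun x => ENNReal.ofReal (ρ x)) :=
    isFiniteMeasure_withDensity_ofReal hρ.2
  refine Measure.pi_eq fun s hs => ?_
  rw [withDensity_apply _ (MeasurableSet.univ_pi hs), Measure.restrict_pi_pi,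
    ← ofReal_integral_eq_lintegral_ofReal
      (Integrable.fintype_prod (f := fun _ => ρ) fun i => hρ.restrict)
      (ae_of_all _ fun _ => Finset.prod_nonneg fun _ _ => hρ0 _),
    integral_fintype_prod_eq_prod (fun _ => ρ),
    ENNReal.ofReal_prod_of_nonneg fun i _ => integral_nonneg hρ0]
  refine Finset.prod_congr rfl fun i _ => ?_
  rw [withDensity_apply _ (hs i), ofReal_integral_eq_lintegral_ofReal hρ.restrict
    (ae_of_all _ hρ0)]


theorem integrable_exp_of_le {Ω : Type*} [MeasurableSpace Ω] {P : Measure Ω}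
    [IsFiniteMeasure P] {f : Ω → ℝ} (hf : Measurable f) {K : ℝ} (hK : ∀ ω, f ω ≤ K) :
    Integrable (fun ω => exp (f ω)) P := by
  refine Integrable.of_bound (C := exp K) (by fun_prop) (ae_of_all _ fun ω => ?_)
  rw [Real.norm_eq_abs, abs_of_pos (exp_pos _)]
  exact exp_le_exp.2 (hK ω)

/-- A centred variable bounded by `1` satisfies `𝔼 exp f ≤ 1 + 𝔼 f² ≤ exp (𝔼 f²)`. -/
theorem integral_exp_le_exp_integral_sq {α : Type*} [MeasurableSpace α] {μ : Measure α}
    [IsProbabilityMeasure μ] {f : α → ℝ} (hf : Measurable f) (hb : ∀ x, |f x| ≤ 1)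
    (h0 : ∫ x, f x ∂μ = 0) : ∫ x, exp (f x) ∂μ ≤ exp (∫ x, f x ^ 2 ∂μ) := by
  have hi : Integrable f μ := .of_bound (C := 1) (by fun_prop) (ae_of_all _ hb)
  have hi2 : Integrable (fun x => f x ^ 2) μ :=
    .of_bound (C := 1) (by fun_prop) (ae_of_all _ fun x => by
      rw [Real.norm_eq_abs, abs_pow]; exact pow_le_one₀ (abs_nonneg _) (hb x))
  have hi1 : Integrable (fun x => 1 + f x) μ := (integrable_const _).add hi
  calc ∫ x, exp (f x) ∂μ ≤ ∫ x, (1 + f x + f x ^ 2) ∂μ := by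
        refine integral_mono (integrable_exp_of_le hf fun x => (abs_le.1 (hb x)).2)
          (hi1.add hi2) fun x => ?_
        have := (abs_le.1 (Real.abs_exp_sub_one_sub_id_le (hb x))).2
        simp only
        linarith
    _ = 1 + ∫ x, f x ^ 2 ∂μ := by
        rw [integral_add hi1 hi2, integral_add (integrable_const _) hi, h0]
        simp
    _ ≤ exp (∫ x, f x ^ 2 ∂μ) := by linarith [add_one_le_exp (∫ x, f x ^ 2 ∂μ)]

/-- The exponential moment of the interaction between two independent groups of at most `N`
particles each. The first cancellation condition is used when integrating out the group `ι`, the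
second to make the remaining sum over the group `κ` centred. -/
theorem integral_exp_bipartite_le {α ι κ : Type*} [MeasurableSpace α] [Fintype ι] [Fintype κ]
    {μ : Measure α} [IsProbabilityMeasure μ] {φ : α → α → ℝ}
    (hφ : Measurable fun p : α × α => φ p.1 p.2) {S : ℝ} (hS0 : 0 ≤ S) (hS : S ≤ 1 / 10)
    (hb : ∀ x z, |φ x z| ≤ S) (h1 : ∀ z, ∫ x, φ x z ∂μ = 0) (h2 : ∀ x, ∫ z, φ x z ∂μ = 0)
    {N : ℕ} (hN : 1 ≤ N) (hι : Fintype.card ι ≤ N) (hκ : Fintype.card κ ≤ N) :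
    ∫ Z : (ι → α) × (κ → α), exp (4 / N * ∑ i, ∑ j, φ (Z.1 i) (Z.2 j))
      ∂((Measure.pi fun _ => μ).prod (Measure.pi fun _ => μ)) ≤ √2 := by
  have hN0 : (0 : ℝ) < N := by exact_mod_cast hN
  have hι' : (Fintype.card ι : ℝ) ≤ N := by exact_mod_cast hι
  have hκ' : (Fintype.card κ : ℝ) ≤ N := by exact_mod_cast hκ
  have hφ1 : ∀ z, Measurable fun x => φ x z := fun z =>
    hφ.comp (measurable_id.prodMk measurable_const)
  have hφ2 : ∀ x, Measurable fun z => φ x z := fun x =>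
    hφ.comp (measurable_const.prodMk measurable_id)
  -- `f x Y` is the total interaction of a particle at `x` with the particles `Y`.
  set f : α → (κ → α) → ℝ := fun x Y => 4 / N * ∑ j, φ x (Y j) with hf
  have hfm : Measurable fun p : α × (κ → α) => f p.1 p.2 := by
    refine Measurable.const_mul (Finset.measurable_sum _ fun j _ => ?_) _
    exact hφ.comp (measurable_fst.prodMk ((measurable_pi_apply j).comp measurable_snd))
  have hfb : ∀ x Y, |f x Y| ≤ 4 * S := by
    intro x Y
    have : |∑ j, φ x (Y j)| ≤ N * S := by
      refine (Finset.abs_sum_le_sum_abs _ _).trans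
        ((Finset.sum_le_sum fun j _ => hb x (Y j)).trans ?_)
      simp only [Finset.sum_const, Finset.card_univ, nsmul_eq_mul]
      gcongr
    rw [hf, abs_mul, abs_of_pos (by positivity)]
    calc 4 / N * |∑ j, φ x (Y j)| ≤ 4 / N * (N * S) := by gcongr
      _ = 4 * S := by field_simp
  have hfb1 : ∀ x Y, |f x Y| ≤ 1 := fun x Y => (hfb x Y).trans (by linarith)
  have hf1 : ∀ Y, Measurable fun x => f x Y :=
    fun Y => hfm.comp (measurable_id.prodMk measurable_const)
  have hf0 : ∀ Y, ∫ x, f x Y ∂μ = 0 := by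
    intro Y
    simp only [hf]
    rw [MeasureTheory.integral_const_mul, MeasureTheory.integral_finsetSum]
    · simp [h1]
    · exact fun j _ => .of_bound (C := S) (hφ1 _).aestronglyMeasurable (ae_of_all _ fun x => hb x _)
  have hsum : ∀ Z : (ι → α) × (κ → α),
      4 / N * ∑ i, ∑ j, φ (Z.1 i) (Z.2 j) = ∑ i, f (Z.1 i) Z.2 := by
    intro Z; simp only [hf, Finset.mul_sum]
  have hsq : ∀ x Y, N * f x Y ^ 2 ≤ N := by
    intro x Y
    have : f x Y ^ 2 ≤ 1 := (sq_le_one_iff_abs_le_one _).2 (hfb1 x Y)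
    nlinarith
  have hfm' : Measurable fun p : (κ → α) × α => f p.2 p.1 := hfm.comp measurable_swap
  have hint : Integrable (fun p : (κ → α) × α => exp (N * f p.2 p.1 ^ 2))
      ((Measure.pi fun _ => μ).prod μ) :=
    integrable_exp_of_le (K := N) (by fun_prop) fun p => hsq _ _
  have hmI : Measurable fun Z : (ι → α) × (κ → α) => ∑ i, f (Z.1 i) Z.2 :=
    Finset.measurable_sum _ fun i _ =>
      hfm.comp (g := fun p : α × (κ → α) => f p.1 p.2)
        (f := fun Z : (ι → α) × (κ → α) => (Z.1 i, Z.2))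
        (((measurable_pi_apply i).comp measurable_fst).prodMk measurable_snd)
  have hI : Integrable (fun Z : (ι → α) × (κ → α) => exp (∑ i, f (Z.1 i) Z.2))
      ((Measure.pi fun _ => μ).prod (Measure.pi fun _ => μ)) := by
    refine integrable_exp_of_le (K := ∑ _i : ι, 1) hmI fun Z => ?_
    exact Finset.sum_le_sum fun i _ => (abs_le.1 (hfb1 _ _)).2
  have hinner : ∀ Y : κ → α, ∫ X : ι → α, exp (∑ i, f (X i) Y) ∂(Measure.pi fun _ => μ)
      ≤ ∫ x, exp (N * f x Y ^ 2) ∂μ := by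
    intro Y
    have hi2 : Integrable (fun x => N * f x Y ^ 2) μ :=
      .of_bound (C := N) (((hf1 Y).pow_const 2).const_mul _).aestronglyMeasurable
        (ae_of_all _ fun x => by
          rw [Real.norm_eq_abs, abs_of_nonneg (by positivity)]; exact hsq x Y)
    simp only [Real.exp_sum]
    rw [integral_fintype_prod_eq_pow (fun x => exp (f x Y))]
    calc (∫ x, exp (f x Y) ∂μ) ^ Fintype.card ι
        ≤ exp (∫ x, f x Y ^ 2 ∂μ) ^ Fintype.card ι := by
          gcongr
          exact integral_exp_le_exp_integral_sq (hf1 Y) (fun x => hfb1 x Y) (hf0 Y)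
      _ = exp (Fintype.card ι * ∫ x, f x Y ^ 2 ∂μ) := by rw [← Real.exp_nat_mul]
      _ ≤ exp (N * ∫ x, f x Y ^ 2 ∂μ) := by
          have : 0 ≤ ∫ x, f x Y ^ 2 ∂μ := integral_nonneg fun _ => sq_nonneg _
          gcongr
      _ = exp (∫ x, N * f x Y ^ 2 ∂μ) := by rw [MeasureTheory.integral_const_mul]
      _ ≤ ∫ x, exp (N * f x Y ^ 2) ∂μ :=
          convexOn_exp.map_integral_le continuous_exp.continuousOn isClosed_univ
            (ae_of_all _ fun _ => Set.mem_univ _) hi2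
            (integrable_exp_of_le (((hf1 Y).pow_const 2).const_mul _) fun x => hsq x Y)
  have houter : ∀ x, ∫ Y : κ → α, exp (N * f x Y ^ 2) ∂(Measure.pi fun _ => μ) ≤ √2 := by
    intro x
    have hindep : iIndepFun (fun (j : κ) (Y : κ → α) => φ x (Y j)) (Measure.pi fun _ => μ) :=
      iIndepFun_pi (X := fun _ => φ x) fun _ => (hφ2 x).aemeasurable
    have hsub1 : ∀ j : κ, HasSubgaussianMGF (fun Y : κ → α => φ x (Y j)) ((‖S - -S‖₊ / 2) ^ 2)
        (Measure.pi fun _ => μ) := by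
      intro j
      refine hasSubgaussianMGF_of_mem_Icc_of_integral_eq_zero
        ((hφ2 x).comp (measurable_pi_apply j)).aemeasurable
        (ae_of_all _ fun Y => abs_le.1 (hb x (Y j))) ?_
      rw [← h2 x]
      exact integral_comp_eval (μ := fun _ : κ => μ) (hφ2 x).aestronglyMeasurable
    have hsub := HasSubgaussianMGF.sum_of_iIndepFun hindep (s := Finset.univ) fun j _ => hsub1 j
    -- `N f² = (32 / N) (∑ j, φ x (Y j))² / 2`, so the linearizing Gaussian has variance `32 / N`.
    have hc : (((32 / N : ℝ≥0)) : ℝ) * ((∑ _j : κ, (‖S - -S‖₊ / 2) ^ 2 : ℝ≥0) : ℝ) ≤ 1 / 2 := by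
      have hS2 : |S - -S| / 2 = S := by rw [sub_neg_eq_add, abs_of_nonneg (by linarith)]; ring
      simp only [Finset.sum_const, Finset.card_univ, nsmul_eq_mul, NNReal.coe_mul, NNReal.coe_div,
        NNReal.coe_pow, NNReal.coe_natCast, coe_nnnorm, Real.norm_eq_abs, NNReal.coe_ofNat, hS2]
      calc 32 / N * (Fintype.card κ * S ^ 2) ≤ 32 / N * (N * (1 / 10) ^ 2) := by gcongr
        _ = 32 / 100 := by field_simp; norm_num
        _ ≤ 1 / 2 := by norm_num
    have hm : Measurable fun Y : κ → α => ∑ j, φ x (Y j) :=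
      Finset.measurable_sum _ fun j _ => (hφ2 x).comp (measurable_pi_apply j)
    refine le_trans (le_of_eq ?_) (integral_exp_sq_le_of_subgaussian hm hsub (by positivity) hc)
    refine integral_congr_ae (ae_of_all _ fun Y => ?_)
    simp only [hf, NNReal.coe_div, NNReal.coe_natCast, NNReal.coe_ofNat]
    congr 1
    field_simp
    ring
  simp_rw [hsum]
  rw [integral_prod_symm _ hI]
  calc _ ≤ ∫ Y : κ → α, ∫ x, exp (N * f x Y ^ 2) ∂μ ∂(Measure.pi fun _ => μ) :=
        integral_mono hI.integral_prod_right hint.integral_prod_left hinner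
    _ = ∫ x, ∫ Y : κ → α, exp (N * f x Y ^ 2) ∂(Measure.pi fun _ => μ) ∂μ :=
        integral_integral_swap hint
    _ ≤ ∫ _x, √2 ∂μ := integral_mono hint.integral_prod_right (integrable_const _) houter
    _ = √2 := by simp

/-- The exponential estimate for i.i.d. particles with an arbitrary law `μ`. -/
theorem integral_exp_le_three {α : Type*} [MeasurableSpace α]
    {μ : Measure α} [IsProbabilityMeasure μ] {φ : α → α → ℝ}
    (hφ : Measurable fun p : α × α => φ p.1 p.2) {S : ℝ} (hS0 : 0 ≤ S) (hS : S ≤ 1 / 10)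
    (hb : ∀ x z, |φ x z| ≤ S) (h1 : ∀ z, ∫ x, φ x z ∂μ = 0) (h2 : ∀ x, ∫ z, φ x z ∂μ = 0)
    {N : ℕ} (hN : 1 ≤ N) :
    ∫ X : Fin N → α, exp (1 / N * ∑ i, ∑ j, φ (X i) (X j)) ∂(Measure.pi fun _ => μ) ≤ 3 := by
  have hN0 : (0 : ℝ) < N := by exact_mod_cast hN
  have hφm : ∀ i j : Fin N, Measurable fun X : Fin N → α => φ (X i) (X j) := fun i j =>
    hφ.comp (f := fun X : Fin N → α => (X i, X j)) ((measurable_pi_apply i).prodMk (measurable_pi_apply j))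
  set G : (Fin N → Bool) → (Fin N → α) → ℝ := fun ε X =>
    4 / N * ∑ i, ∑ j, if ε i = true ∧ ε j = false then φ (X i) (X j) else 0 with hG
  have hGm : ∀ ε, Measurable (G ε) := by
    intro ε
    refine (Finset.measurable_sum _ fun i _ => Finset.measurable_sum _ fun j _ => ?_).const_mul _
    split_ifs
    exacts [hφm i j, measurable_const]
  have hGi : ∀ ε, Integrable (fun X => exp (G ε X)) (Measure.pi fun _ => μ) := by
    intro ε
    refine integrable_exp_of_le (hGm ε) (K := 4 / N * ∑ _i : Fin N, ∑ _j : Fin N, S) fun X => ?_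
    simp only [hG]
    gcongr with i _ j _
    split_ifs
    exacts [(abs_le.1 (hb _ _)).2, hS0]
  have hG2 : ∀ ε, ∫ X, exp (G ε X) ∂(Measure.pi fun _ => μ) ≤ √2 := by
    intro ε
    have hcard : ∀ (p : Fin N → Prop) [DecidablePred p], Fintype.card {i // p i} ≤ N :=
      fun p _ =>
      (Fintype.card_subtype_le p).trans (by simp)
    have hmp := measurePreserving_piEquivPiSubtypeProd (fun _ : Fin N => μ) (fun i => ε i = true)
    have := integral_exp_bipartite_le (μ := μ) hφ hS0 hS hb h1 h2 hN
      (hcard fun i => ε i = true) (hcard fun i => ¬ ε i = true)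
    rw [← hmp.integral_comp'] at this
    refine le_trans (le_of_eq ?_) this
    refine integral_congr_ae (ae_of_all _ fun X => ?_)
    simp only [hG]
    congr 2
    rw [← Fintype.sum_subtype_add_sum_subtype (fun i => ε i = true)]
    have hz : ∑ i : {i // ¬ ε i = true}, ∑ j,
        (if ε i = true ∧ ε j = false then φ (X i) (X j) else 0) = 0 :=
      Finset.sum_eq_zero fun i _ => Finset.sum_eq_zero fun j _ => by simp [i.2]
    rw [hz, add_zero]
    refine Finset.sum_congr rfl fun i _ => ?_
    rw [← Fintype.sum_subtype_add_sum_subtype (fun i => ε i = true)]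
    have hz : ∑ j : {j // ε j = true},
        (if ε i = true ∧ ε j = false then φ (X i) (X j) else 0) = 0 :=
      Finset.sum_eq_zero fun j _ => by simp [j.2]
    rw [hz, zero_add]
    refine Finset.sum_congr rfl fun j _ => ?_
    rw [if_pos ⟨i.2, by simpa using j.2⟩]
    rfl
  -- The diagonal terms contribute at most `S` to the exponent.
  have hpt : ∀ X : Fin N → α, exp (1 / N * ∑ i, ∑ j, φ (X i) (X j))
      ≤ exp S * ∑ ε : Fin N → Bool, ((2 : ℝ) ^ N)⁻¹ * exp (G ε X) := by
    intro X
    have hdiag : 1 / N * ∑ i, ∑ j, φ (X i) (X j)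
        ≤ S + ∑ i, ∑ j, if i = j then 0 else 1 / N * φ (X i) (X j) := by
      have h : ∑ i, ∑ j, 1 / N * φ (X i) (X j)
          ≤ ∑ i, ∑ j, ((if i = j then 1 / N * S else 0)
            + if i = j then 0 else 1 / N * φ (X i) (X j)) := by
        gcongr with i _ j _
        split_ifs
        · have := (abs_le.1 (hb (X i) (X j))).2
          rw [add_zero]; gcongr
        · simp
      simp only [Finset.sum_add_distrib] at h
      simp only [Finset.mul_sum]
      refine h.trans (le_of_eq ?_)
      congr 1
      simp
      field_simp
    have hdec := exp_decoupling (fun i j : Fin N => 1 / N * φ (X i) (X j))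
    rw [Fintype.card_fin] at hdec
    calc _ ≤ exp (S + ∑ i, ∑ j, if i = j then 0 else 1 / N * φ (X i) (X j)) :=
          exp_le_exp.2 hdiag
      _ ≤ _ := by
          rw [Real.exp_add]
          gcongr
          refine hdec.trans (le_of_eq (Finset.sum_congr rfl fun ε _ => ?_))
          congr 2
          simp only [hG, Finset.mul_sum]
          refine Finset.sum_congr rfl fun i _ => Finset.sum_congr rfl fun j _ => ?_
          split_ifs <;> ring
  have hexpS : exp S ≤ 2 := by
    have := (abs_le.1 (Real.abs_exp_sub_one_sub_id_le (x := S)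
      (by rw [abs_of_nonneg hS0]; linarith))).2
    nlinarith
  have hsqrt : √2 ≤ 3 / 2 := by
    rw [Real.sqrt_le_left (by norm_num)]; norm_num
  calc _ ≤ ∫ X, exp S * ∑ ε : Fin N → Bool, ((2 : ℝ) ^ N)⁻¹ * exp (G ε X)
          ∂(Measure.pi fun _ => μ) := by
        refine integral_mono_of_nonneg (ae_of_all _ fun _ => (exp_pos _).le) ?_ (ae_of_all _ hpt)
        exact (integrable_finsetSum _ fun ε _ => (hGi ε).const_mul _).const_mul _
    _ = exp S * ∑ ε : Fin N → Bool, ((2 : ℝ) ^ N)⁻¹ *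
          ∫ X, exp (G ε X) ∂(Measure.pi fun _ => μ) := by
        rw [MeasureTheory.integral_const_mul, MeasureTheory.integral_finsetSum _ fun ε _ => (hGi ε).const_mul _]
        simp only [MeasureTheory.integral_const_mul]
    _ ≤ 2 * ∑ _ε : Fin N → Bool, ((2 : ℝ) ^ N)⁻¹ * (3 / 2) := by
        gcongr with ε _
        exact (hG2 ε).trans hsqrt
    _ = 3 := by
        simp
        norm_num

end JabinWang

/-- Theorem 4 of Jabin–Wang: there is a universal constant `C` such that
for any probability density `ρ̄` and bounded `φ` with `γ = C‖φ‖²_{L^∞} < 1` satisfying the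
two cancellation conditions, `∫ ρ̄_N exp((1/N) Σ_{i,j} φ(xᵢ,xⱼ)) ≤ 3/(1−γ)`. Here `S` is the
(essential) sup-norm of `φ`. -/
theorem jabin_wang_theorem4 :
    ∃ C : ℝ, 0 < C ∧ ∀ (d N : ℕ), 1 ≤ d → 1 ≤ N →
      ∀ ρb : Euc d → ℝ, Measurable ρb → (∀ x, 0 ≤ ρb x) → ZPer ρb →
        (∫ x in cube d, ρb x) = 1 →
      ∀ φ : Euc d → Euc d → ℝ, Measurable (fun p : Euc d × Euc d => φ p.1 p.2) →
      ∀ S : ℝ, 0 ≤ S → (∀ x z, |φ x z| ≤ S) → C * S ^ 2 < 1 →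
        (∀ z, (∫ x in cube d, φ x z * ρb x) = 0) →
        (∀ x, (∫ z in cube d, φ x z * ρb z) = 0) →
        (∫ X in cubeN N d, tensorN ρb X *
            Real.exp ((1 / (N:ℝ)) * ∑ i, ∑ j, φ (X i) (X j)))
          ≤ 3 / (1 - C * S ^ 2) := by
  refine ⟨100, by norm_num, ?_⟩
  intro d N _ hN ρb hρm hρ0 _ hρ1 φ hφ S hS0 hb hCS h1 h2
  -- With `C = 100`, the assumption `C * S ^ 2 < 1` gives the smallness `S ≤ 1 / 10`.
  have hS : S ≤ 1 / 10 := by nlinarith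
  have hρi : Integrable ρb (volume.restrict (cube d)) :=
    Integrable.of_integral_ne_zero (by rw [hρ1]; exact one_ne_zero)
  set μ : Measure (Euc d) :=
    (volume.restrict (cube d)).withDensity fun x => ENNReal.ofReal (ρb x) with hμ
  have hμp : IsProbabilityMeasure μ := by
    refine ⟨?_⟩
    rw [hμ, withDensity_apply _ MeasurableSet.univ, Measure.restrict_univ,
      ← ofReal_integral_eq_lintegral_ofReal hρi (ae_of_all _ hρ0), hρ1, ENNReal.ofReal_one]
  have hint : ∀ f : Euc d → ℝ, ∫ x, f x ∂μ = ∫ x in cube d, f x * ρb x := by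
    intro f
    rw [hμ, integral_withDensity_eq_integral_toReal_smul (by fun_prop)
      (ae_of_all _ fun _ => ENNReal.ofReal_lt_top)]
    simp only [ENNReal.toReal_ofReal (hρ0 _), smul_eq_mul, mul_comm]
  have hpi : Measure.pi (fun _ : Fin N => volume.restrict (cube d))
      = (volume : Measure (Conf N d)).restrict (cubeN N d) := by
    rw [← Measure.restrict_pi_pi, volume_pi]
    congr 1
    ext X
    simp [cubeN]
  have hmain := JabinWang.integral_exp_le_three (μ := μ) hφ hS0 hS hb
    (fun z => by rw [hint, h1]) (fun x => by rw [hint, h2]) hN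
  rw [hμ, JabinWang.pi_withDensity_ofReal _ hρ0 hρi, hpi,
    integral_withDensity_eq_integral_toReal_smul (by fun_prop)
      (ae_of_all _ fun _ => ENNReal.ofReal_lt_top)] at hmain
  simp only [ENNReal.toReal_ofReal (Finset.prod_nonneg fun _ _ => hρ0 _), smul_eq_mul] at hmain
  refine le_trans hmain ?_
  rw [le_div_iff₀ (by linarith)]
  nlinarith [sq_nonneg S]
end
end
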